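/- arXiv:2510.22773 — 3 statements merged into one kernel-verified Lean document; each statement's English description precedes it below -/
import Mathlib

section
/- Let $b, c, s, \tau, w > 0$ and $p \in \mathbb{R}$. Define the CUBIC window size $W = w + c\,(s - (b w / c)^{1/3})^3$ (using the real cube root) and the sending rate $x = W/\tau$. Then the pair of fluid-equilibrium conditions [$W = w$ and $s \cdot x \cdot p = 1$] holds if and only if $w = (c/b)\,s^3$ and $p = b\tau/(c\,s^4)$. -/
/-- The CUBIC window equals its maximum exactly when `w = (c / b) s ^ 3`. -/
theorem cubic_window_eq_max_iff {b c s w : ℝ}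
    (hb : 0 < b) (hc : 0 < c) (hs : 0 < s) (hw : 0 < w) :
    w + c * (s - (b * w / c) ^ ((1 : ℝ) / 3)) ^ 3 = w ↔ w = (c / b) * s ^ 3 := by
  have hq : 0 ≤ b * w / c := by positivity
  have hroot : s = (b * w / c) ^ ((1 : ℝ) / 3) ↔ s ^ 3 = b * w / c := by
    rw [one_div, Real.eq_rpow_inv hs.le hq (by norm_num)]
    norm_cast
  rw [add_eq_left, mul_eq_zero, or_iff_right hc.ne', pow_eq_zero_iff three_ne_zero,
    sub_eq_zero, hroot, eq_div_iff hc.ne', div_mul_eq_mul_div, eq_div_iff hb.ne']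
  constructor <;> intro h <;> linarith

/-- CUBIC fluid-equilibrium characterization: for `b, c, s, τ, w > 0` and real `p`,
with window size `W = w + c (s - (b w / c)^(1/3))^3` and rate `x = W/τ`,
the conditions `W = w` and `s·x·p = 1` hold iff `w = (c/b) s^3` and `p = bτ/(c s^4)`. -/
theorem cubic_fluid_equilibrium (b c s τ w p : ℝ)
    (hb : 0 < b) (hc : 0 < c) (hs : 0 < s) (hτ : 0 < τ) (hw : 0 < w) :
    (w + c * (s - (b * w / c) ^ ((1 : ℝ) / 3)) ^ 3 = w ∧
      s * ((w + c * (s - (b * w / c) ^ ((1 : ℝ) / 3)) ^ 3) / τ) * p = 1) ↔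
    (w = (c / b) * s ^ 3 ∧ p = b * τ / (c * s ^ 4)) := by
  rw [← cubic_window_eq_max_iff hb hc hs hw]
  refine and_congr_right fun hW => ?_
  rw [hW, (cubic_window_eq_max_iff hb hc hs hw).mp hW]
  field_simp
end

section
/- Let $b, c, \tau, \alpha, \chi > 0$ and $C \in \mathbb{R}$ with $C > 0$, and define $\tilde{S}_2'(s) = \dfrac{7c^2}{b\tau} s^6 - 4c\,(C - \alpha\chi)\, s^3 - 3c\, s^2$. Then there exists $s' > 0$ such that $\tilde{S}_2'(s) < 0$ for all $s$ with $0 < s < s'$, and $\tilde{S}_2'(s) > 0$ for all $s > s'$ (in particular $s'$ is the unique positive root of $\tilde{S}_2'$). -/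
/-- For `A, E > 0`, the quartic `A s⁴ - D s - E` has a positive root. -/
lemma exists_pos_root_quartic {A E : ℝ} (D : ℝ) (hA : 0 < A) (hE : 0 < E) :
    ∃ r : ℝ, 0 < r ∧ A * r ^ 4 - D * r - E = 0 := by
  set M : ℝ := 1 + (|D| + E) / A with hM
  have hM1 : 1 ≤ M := by
    have : 0 ≤ (|D| + E) / A := by positivity
    linarith
  have hAM : A * M = A + |D| + E := by
    rw [hM]
    field_simp
    ring
  have hend : 0 ≤ A * M ^ 4 - D * M - E := by
    have hpow : A * M ^ 2 ≤ A * M ^ 4 := by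
      gcongr
      norm_num
    have hsq : A * M ^ 2 = (A + |D| + E) * M := by
      rw [← hAM]
      ring
    have hD : D * M ≤ |D| * M := by
      gcongr
      exact le_abs_self D
    nlinarith
  have hcont : ContinuousOn (fun s : ℝ => A * s ^ 4 - D * s - E) (Set.Icc 0 M) := by
    fun_prop
  obtain ⟨r, ⟨hr0, -⟩, hr⟩ := intermediate_value_Icc (by linarith : (0 : ℝ) ≤ M) hcont
    (show (0 : ℝ) ∈ Set.Icc _ _ from ⟨by simpa using hE.le, hend⟩)
  refine ⟨r, hr0.lt_of_ne ?_, hr⟩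
  rintro rfl
  simp at hr
  linarith

/-- For `A, E > 0`, the quartic `A s⁴ - D s - E` changes sign exactly once on `(0, ∞)`,
from negative to positive. -/
lemma exists_sign_change_quartic {A E : ℝ} (D : ℝ) (hA : 0 < A) (hE : 0 < E) :
    ∃ r : ℝ, 0 < r ∧ (∀ s : ℝ, 0 < s → s < r → A * s ^ 4 - D * s - E < 0) ∧
      ∀ s : ℝ, r < s → 0 < A * s ^ 4 - D * s - E := by
  obtain ⟨r, hr, hroot⟩ := exists_pos_root_quartic D hA hE
  have key (s : ℝ) : r * (A * s ^ 4 - D * s - E) =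
      A * r * s * (s ^ 3 - r ^ 3) + E * (s - r) := by
    linear_combination s * hroot
  refine ⟨r, hr, fun s hs hsr => ?_, fun s hrs => ?_⟩
  · have hcube : s ^ 3 < r ^ 3 := by gcongr
    have hneg : r * (A * s ^ 4 - D * s - E) < 0 := by
      rw [key]
      exact add_neg (mul_neg_of_pos_of_neg (by positivity) (sub_neg.2 hcube))
        (mul_neg_of_pos_of_neg hE (sub_neg.2 hsr))
    exact neg_of_mul_neg_right hneg hr.le
  · have hs : 0 < s := hr.trans hrs
    have hcube : r ^ 3 < s ^ 3 := by gcongr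
    have hpos : 0 < r * (A * s ^ 4 - D * s - E) := by
      rw [key]
      exact add_pos (mul_pos (by positivity) (sub_pos.2 hcube)) (mul_pos hE (sub_pos.2 hrs))
    exact pos_of_mul_pos_right hpos hr.le

/-- Unique turning point of `S̃₂'(s) = (7c²/(bτ)) s⁶ - 4c (C - αχ) s³ - 3c s²`:
there is an `s' > 0` such that `S̃₂'` is negative on `(0, s')` and positive on
`(s', ∞)`. -/
theorem S2_deriv_unique_turning_point (b c τ α χ C : ℝ)
    (hb : 0 < b) (hc : 0 < c) (hτ : 0 < τ) (hα : 0 < α) (hχ : 0 < χ) (hC : 0 < C) :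
    ∃ s' : ℝ, 0 < s' ∧
      (∀ s : ℝ, 0 < s → s < s' →
        7 * c ^ 2 / (b * τ) * s ^ 6 - 4 * c * (C - α * χ) * s ^ 3 - 3 * c * s ^ 2 < 0) ∧
      (∀ s : ℝ, s' < s →
        0 < 7 * c ^ 2 / (b * τ) * s ^ 6 - 4 * c * (C - α * χ) * s ^ 3 - 3 * c * s ^ 2) := by
  obtain ⟨r, hr, hneg, hpos⟩ := exists_sign_change_quartic (4 * c * (C - α * χ))
    (by positivity : 0 < 7 * c ^ 2 / (b * τ)) (by positivity : 0 < 3 * c)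
  have factor (s : ℝ) :
      7 * c ^ 2 / (b * τ) * s ^ 6 - 4 * c * (C - α * χ) * s ^ 3 - 3 * c * s ^ 2 =
        s ^ 2 * (7 * c ^ 2 / (b * τ) * s ^ 4 - 4 * c * (C - α * χ) * s - 3 * c) := by
    ring
  refine ⟨r, hr, fun s hs hsr => ?_, fun s hrs => ?_⟩
  · rw [factor]
    exact mul_neg_of_pos_of_neg (by positivity) (hneg s hs hsr)
  · rw [factor]
    exact mul_pos (pow_pos (hr.trans hrs) 2) (hpos s hrs)
end

section
/- Let $\tau > 0$, $\chi > 0$, $C > 0$ and $0 < \beta \leq \alpha$. Then for every real $w > \tau\alpha(C - \chi)$ it holds that $\dfrac{1}{\beta\tau} w^2 + \dfrac{\alpha(2\chi - C)}{\beta} w + \dfrac{\tau \alpha^2 \chi^2}{\beta} - \tau\alpha C \chi > 0$. -/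
/-- Positivity of the quadratic
`Ψ(w) = (1/(βτ)) w² + (α(2χ - C)/β) w + τα²χ²/β - ταCχ` for all
`w > τα(C - χ)`, given `τ, χ, C > 0` and `0 < β ≤ α`. -/
theorem quadratic_positive_above_threshold' (τ χ C α β : ℝ)
    (hτ : 0 < τ) (hχ : 0 < χ) (hC : 0 < C) (hβ : 0 < β) (hβα : β ≤ α) :
    ∀ w : ℝ, τ * α * (C - χ) < w →
      0 < 1 / (β * τ) * w ^ 2 + α * (2 * χ - C) / β * w
          + τ * α ^ 2 * χ ^ 2 / β - τ * α * C * χ := by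
  intro w hw
  have hα : 0 < α := hβ.trans_le hβα
  have hgap : 0 < w + τ * α * χ - τ * α * C := by linarith
  have hsum : 0 < w + τ * α * χ := by
    have : 0 < τ * α * C := by positivity
    linarith
  have hslack : 0 ≤ τ ^ 2 * α * C * χ * (α - β) :=
    mul_nonneg (by positivity) (sub_nonneg.2 hβα)
  have hfactor : 1 / (β * τ) * w ^ 2 + α * (2 * χ - C) / β * w
      + τ * α ^ 2 * χ ^ 2 / β - τ * α * C * χ
      = ((w + τ * α * χ) * (w + τ * α * χ - τ * α * C)
          + τ ^ 2 * α * C * χ * (α - β)) / (β * τ) := by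
    field_simp
    ring
  rw [hfactor]
  positivity
end
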